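/- arXiv:1212.2243 — 3 statements merged into one kernel-verified Lean document; each statement's English description precedes it below -/
import Mathlib

section
/- Let 𝔽 be any finite field, let a₁,…,a_n be pairwise distinct nonzero elements of 𝔽, let b ∈ 𝔽, and let 0 ≤ δ < n. Then there exists λ = (λ₀,…,λ_δ) ∈ 𝔽^{δ+1} such that the 1-dimensional convolutional code C_λ generated over 𝔽[z] by the row vector (s_λ(a₁z+b), …, s_λ(a_n z+b)), with s_λ(t) = Σ_{i=0}^{δ} λ_i t^i, satisfies d_free(C_λ) = n(δ+1); in particular, MDS convolutional codes of type [n,1,δ] exist over 𝔽 itself, without enlarging the base field. -/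
open Polynomial

/-- The weight of a vector of polynomials: the total number of nonzero coefficients. -/
noncomputable def polyWeight {F : Type*} [Field F] {n : ℕ} (c : Fin n → Polynomial F) : ℕ :=
  ∑ j, (c j).support.card

/-- The free distance of a submodule of `𝔽[z]ⁿ`: the minimal weight of a nonzero element. -/
noncomputable def freeDist {F : Type*} [Field F] {n : ℕ}
    (C : Submodule (Polynomial F) (Fin n → Polynomial F)) : ℕ :=
  sInf {d | ∃ c ∈ C, c ≠ 0 ∧ polyWeight c = d}

/-- The Hamming weight of a vector. -/
noncomputable def hammingWt {F : Type*} [Field F] {n : ℕ} (v : Fin n → F) : ℕ :=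
  Set.ncard {j | v j ≠ 0}

/-- The minimum distance of a linear block code. -/
noncomputable def minDist {F : Type*} [Field F] {n : ℕ} (C : Submodule F (Fin n → F)) : ℕ :=
  sInf {d | ∃ v ∈ C, v ≠ 0 ∧ hammingWt v = d}

/-- The `l`-th row distance of the convolutional code with generator matrix `G`. -/
noncomputable def rowDist {F : Type*} [Field F] {k n : ℕ}
    (G : Fin k → Fin n → Polynomial F) (l : ℕ) : ℕ :=
  sInf {d | ∃ α : Fin k → Polynomial F, α ≠ 0 ∧ (∀ i, (α i).natDegree ≤ l) ∧
    polyWeight (fun j => ∑ i, α i * G i j) = d}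

/-- The set of maximal (`k × k`) minors of a `k × n` polynomial matrix. -/
def maximalMinors {F : Type*} [Field F] {k n : ℕ} (G : Fin k → Fin n → Polynomial F) :
    Set (Polynomial F) :=
  {p | ∃ φ : Fin k ↪ Fin n, p = Matrix.det (Matrix.of fun i j => G i (φ j))}

/-- A generator matrix is basic when its maximal minors are coprime, i.e. generate the
unit ideal of `𝔽[z]`. -/
def IsBasic {F : Type*} [Field F] {k n : ℕ} (G : Fin k → Fin n → Polynomial F) : Prop :=
  Ideal.span (maximalMinors G) = ⊤

/-- The degree of the code: the highest degree of the maximal minors of a generator matrix. -/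
noncomputable def degCode {F : Type*} [Field F] {k n : ℕ}
    (G : Fin k → Fin n → Polynomial F) : ℕ :=
  sSup (Polynomial.natDegree '' maximalMinors G)

/-- The degree of the `i`-th row of a polynomial matrix. -/
noncomputable def rowDeg {F : Type*} [Field F] {k n : ℕ}
    (G : Fin k → Fin n → Polynomial F) (i : Fin k) : ℕ :=
  Finset.univ.sup fun j => (G i j).natDegree

/-- A generator matrix is reduced when the sum of its row degrees equals the maximal degree
of its maximal minors. -/
def IsReducedMatrix {F : Type*} [Field F] {k n : ℕ} (G : Fin k → Fin n → Polynomial F) : Prop :=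
  (∑ i, rowDeg G i) = degCode G

/-- A generator matrix is canonical when it is basic and reduced. -/
def IsCanonical {F : Type*} [Field F] {k n : ℕ} (G : Fin k → Fin n → Polynomial F) : Prop :=
  IsBasic G ∧ IsReducedMatrix G

/-- A nonzero polynomial whose coefficients are supported in `[lo, hi]` has at most `hi - lo`
nonzero roots. -/
lemma card_filter_eval_eq_zero_le {F ι : Type*} [Field F] [Fintype ι] [DecidableEq F]
    {a : ι → F} (ha : ∀ i, a i ≠ 0) (hinj : Function.Injective a) {P : F[X]} (hP : P ≠ 0)
    {lo hi : ℕ} (hsupp : ∀ k, P.coeff k ≠ 0 → lo ≤ k ∧ k ≤ hi) :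
    (Finset.univ.filter fun j : ι => P.eval (a j) = 0).card ≤ hi - lo := by
  obtain ⟨Q, rfl⟩ : X ^ lo ∣ P := X_pow_dvd_iff.2 fun d hd => by
    by_contra h
    have := hsupp d h
    omega
  have hQ : Q ≠ 0 := right_ne_zero_of_mul hP
  have hdeg : Q.natDegree ≤ hi - lo := by
    have := (hsupp (Q.natDegree + lo) (by simpa [coeff_X_pow_mul] using hQ)).2
    omega
  calc (Finset.univ.filter fun j => (X ^ lo * Q : F[X]).eval (a j) = 0).card
      ≤ Q.roots.toFinset.card := by
        refine Finset.card_le_card_of_injOn a (fun j hj => ?_) hinj.injOn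
        simpa [hQ, ha j] using hj
    _ ≤ Q.roots.card := Q.roots.toFinset_card_le
    _ ≤ hi - lo := (card_roots' Q).trans hdeg

/-- The sum of the widths of the rows of a parallelogram with sides `L` and `δ`. -/
lemma sum_range_min_sub (L δ : ℕ) :
    ∑ t ∈ Finset.range (L + δ + 1), (min t δ - (t - L)) = L * δ := by
  have hsum : ∑ t ∈ Finset.range (L + δ + 1), (min t δ - (t - L))
      + ∑ t ∈ Finset.range (L + δ + 1), (t - L)
      = ∑ t ∈ Finset.range (L + δ + 1), min t δ := by
    rw [← Finset.sum_add_distrib]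
    refine Finset.sum_congr rfl fun t ht => ?_
    have := Finset.mem_range.1 ht
    omega
  have hsub : ∑ t ∈ Finset.range (L + δ + 1), (t - L) = ∑ t ∈ Finset.range (δ + 1), t := by
    rw [add_assoc, Finset.sum_range_add,
      Finset.sum_eq_zero fun t ht => Nat.sub_eq_zero_of_le (Finset.mem_range.1 ht).le]
    simp
  have hmin : ∑ t ∈ Finset.range (L + δ + 1), min t δ
      = ∑ t ∈ Finset.range (δ + 1), t + L * δ := by
    rw [show L + δ + 1 = (δ + 1) + L by ring, Finset.sum_range_add]
    congr 1
    · exact Finset.sum_congr rfl fun t ht =>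
        min_eq_left (Nat.lt_succ_iff.1 (Finset.mem_range.1 ht))
    · rw [Finset.sum_congr rfl fun t _ => min_eq_right (by omega : δ ≤ δ + 1 + t)]
      simp
  omega

/-- A nonzero polynomial `u` starts with a block of coefficients, from its trailing degree `s` to
`s + L`, in which no `δ + 1` consecutive coefficients vanish, and which is followed by `δ` zero
coefficients. -/
lemma exists_initial_block {F : Type*} [Field F] {u : F[X]} (hu : u ≠ 0) (δ : ℕ) :
    ∃ s L : ℕ, (∀ k, u.coeff k ≠ 0 → s ≤ k) ∧
      (∀ k, s + L < k → k ≤ s + L + δ → u.coeff k = 0) ∧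
      ∀ t ≤ L + δ, ∃ k, u.coeff k ≠ 0 ∧ k ≤ s + t ∧ s + t ≤ k + δ := by
  classical
  have hex : ∃ l, u.coeff l ≠ 0 ∧ ∀ k, l < k → k ≤ l + δ → u.coeff k = 0 :=
    ⟨u.natDegree, by simpa using hu, fun k hk _ => coeff_eq_zero_of_natDegree_lt hk⟩
  obtain ⟨hl, hgap⟩ := Nat.find_spec hex
  have hmin : ∀ k, u.coeff k ≠ 0 → u.natTrailingDegree ≤ k :=
    fun k hk => natTrailingDegree_le_of_ne_zero hk
  obtain ⟨L, hL⟩ := Nat.exists_eq_add_of_le (hmin _ hl)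
  refine ⟨u.natTrailingDegree, L, hmin, ?_, fun t ht => ?_⟩
  · rwa [← hL]
  by_cases htL : L ≤ t
  · exact ⟨_, hl, by omega, by omega⟩
  have hs : u.coeff u.natTrailingDegree ≠ 0 := by simpa using hu
  set m := u.natTrailingDegree + t with hm
  have hk := Nat.findGreatest_spec (P := fun k => u.coeff k ≠ 0) (n := m) (by omega) hs
  have hkm := Nat.findGreatest_le (P := fun k => u.coeff k ≠ 0) m
  refine ⟨_, hk, hkm, ?_⟩
  by_contra! hlt
  refine Nat.find_min hex (m := Nat.findGreatest (fun k => u.coeff k ≠ 0) m) (by omega)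
    ⟨hk, fun k h₁ h₂ => ?_⟩
  by_contra h
  exact Nat.findGreatest_is_greatest h₁ (by omega) h

/-- If the coefficients of `q` are nonzero exactly in degrees `≤ δ`, every nonzero multiple of
`(q(a₁z), …, q(aₙz))` has weight at least `n(δ+1)`. -/
lemma le_polyWeight_mul_comp {F : Type*} [Field F] {n δ : ℕ} (hδ : δ < n)
    {a : Fin n → F} (ha : ∀ i, a i ≠ 0) (hinj : Function.Injective a) {q : F[X]}
    (hq : ∀ k, q.coeff k ≠ 0 ↔ k ≤ δ) {u : F[X]} (hu : u ≠ 0) :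
    n * (δ + 1) ≤ polyWeight fun j => u * q.comp (C (a j) * X) := by
  classical
  obtain ⟨s, L, hs, hgap, hblock⟩ := exists_initial_block hu δ
  set c : Fin n → F[X] := fun j => u * q.comp (C (a j) * X) with hc
  have hweight : ∑ t ∈ Finset.range (L + δ + 1),
      (Finset.univ.filter fun j => (c j).coeff (s + t) ≠ 0).card ≤ polyWeight c := by
    simp_rw [Finset.card_filter]
    rw [Finset.sum_comm]
    refine Finset.sum_le_sum fun j _ => ?_
    rw [← Finset.card_filter]
    refine Finset.card_le_card_of_injOn (s + ·) (fun t ht => ?_) (add_right_injective s).injOn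
    simpa using (Finset.mem_filter.1 ht).2
  have hrow : ∀ t ∈ Finset.range (L + δ + 1),
      n ≤ (Finset.univ.filter fun j => (c j).coeff (s + t) ≠ 0).card
        + (min t δ - (t - L)) := by
    intro t ht
    have ht' := Finset.mem_range.1 ht
    set P : F[X] := ∑ x ∈ Finset.HasAntidiagonal.antidiagonal (s + t),
      C (u.coeff x.1 * q.coeff x.2) * X ^ x.2
      with hPdef
    have heval : ∀ j, (c j).coeff (s + t) = P.eval (a j) := fun j => by
      simp [hc, hPdef, coeff_mul, eval_finsetSum, comp_C_mul_X_coeff, mul_assoc]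
    have hcoeff : ∀ x k, x + k = s + t → P.coeff k = u.coeff x * q.coeff k := fun x k h => by
      rw [hPdef, finsetSum_coeff, Finset.sum_eq_single (x, k)]
      · rw [coeff_C_mul_X_pow, if_pos rfl]
      · rintro ⟨y, i⟩ hy hne
        have hy' := Finset.HasAntidiagonal.mem_antidiagonal.1 hy
        rw [coeff_C_mul_X_pow, if_neg]
        rintro rfl
        exact hne (Prod.ext (by omega) rfl)
      · simp [h]
    have hP : P ≠ 0 := by
      obtain ⟨k, hk, hk₁, hk₂⟩ := hblock t (by omega)
      intro h
      have := hcoeff k (s + t - k) (by omega)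
      rw [h, coeff_zero] at this
      exact mul_ne_zero hk ((hq _).2 (by omega)) this.symm
    have hsupp : ∀ k, P.coeff k ≠ 0 → t - L ≤ k ∧ k ≤ min t δ := by
      intro k hk
      have hkt : k ≤ s + t := by
        by_contra hlt
        refine hk ?_
        rw [hPdef, finsetSum_coeff]
        refine Finset.sum_eq_zero fun x hx => ?_
        have := Finset.HasAntidiagonal.mem_antidiagonal.1 hx
        rw [coeff_C_mul_X_pow, if_neg (by omega)]
      rw [hcoeff (s + t - k) k (by omega)] at hk
      have hkδ := (hq k).1 (right_ne_zero_of_mul hk)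
      have h₁ := hs _ (left_ne_zero_of_mul hk)
      have h₂ : s + t - k ≤ s + L := by
        by_contra hlt
        exact left_ne_zero_of_mul hk (hgap _ (by omega) (by omega))
      omega
    have hroots := card_filter_eval_eq_zero_le ha hinj hP hsupp
    have hsplit := Finset.card_filter_add_card_filter_not (s := (Finset.univ : Finset (Fin n)))
      (fun j => P.eval (a j) = 0)
    simp only [Finset.card_univ, Fintype.card_fin] at hsplit
    simp only [heval, ne_eq]
    omega
  have htotal := Finset.sum_le_sum hrow
  rw [Finset.sum_add_distrib, sum_range_min_sub, Finset.sum_const, Finset.card_range,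
    smul_eq_mul] at htotal
  have hLδ : L * δ ≤ L * n := Nat.mul_le_mul_left L hδ.le
  nlinarith

/-- Over any finite field `𝔽` with `n` pairwise distinct nonzero elements
`a₁,…,a_n`, any `b ∈ 𝔽` and any `0 ≤ δ < n`, there exists a parameter `λ` such that the
1-dimensional convolutional Goppa code generated by `(s_λ(a₁z+b), …, s_λ(a_nz+b))` attains
the generalized Singleton bound `d_free = n(δ+1)`: MDS convolutional codes of type
`[n,1,δ]` exist over `𝔽` itself. -/
theorem exists_MDS_goppa {F : Type*} [Field F] [Fintype F] {n δ : ℕ} (hδ : δ < n)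
    (a : Fin n → F) (ha : ∀ i, a i ≠ 0) (hinj : Function.Injective a) (b : F) :
    ∃ lam : Fin (δ + 1) → F,
      freeDist (Submodule.span (Polynomial F)
        {fun j : Fin n =>
          (∑ i : Fin (δ + 1), Polynomial.C (lam i) * Polynomial.X ^ (i : ℕ)).comp
            (Polynomial.C (a j) * Polynomial.X + Polynomial.C b)}) = n * (δ + 1) := by
  classical
  set q : F[X] := ∑ i ∈ Finset.range (δ + 1), X ^ i with hqdef
  have hcoeff : ∀ k, q.coeff k = if k ≤ δ then 1 else 0 := fun k => by
    simp [hqdef, coeff_X_pow]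
  have hq : ∀ k, q.coeff k ≠ 0 ↔ k ≤ δ := fun k => by simp [hcoeff]
  have hdeg : (q.comp (X - C b)).natDegree < δ + 1 := by
    rw [natDegree_comp, natDegree_X_sub_C, mul_one, Nat.lt_succ_iff,
      natDegree_le_iff_coeff_eq_zero]
    intro k hk
    simp [hcoeff, hk]
  refine ⟨fun i => (q.comp (X - C b)).coeff i, ?_⟩
  have hgen : (fun j : Fin n =>
      (∑ i : Fin (δ + 1), C ((q.comp (X - C b)).coeff i) * X ^ (i : ℕ)).comp
        (C (a j) * X + C b)) = fun j => q.comp (C (a j) * X) := by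
    funext j
    rw [Fin.sum_univ_eq_sum_range fun i => C ((q.comp (X - C b)).coeff i) * X ^ i,
      ← as_sum_range_C_mul_X_pow' _ hdeg, comp_assoc]
    simp
  rw [hgen]
  have hsupp : ∀ j, (q.comp (C (a j) * X)).support = Finset.range (δ + 1) := fun j => by
    ext k
    simp [comp_C_mul_X_coeff, hcoeff, ha j]
  have hne : (fun j => q.comp (C (a j) * X)) ≠ 0 := fun h => by
    have h0 := hsupp ⟨0, by omega⟩
    rw [show q.comp (C (a ⟨0, by omega⟩) * X) = 0 from congrFun h _, support_zero] at h0
    simpa using congrArg Finset.card h0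
  refine le_antisymm (Nat.sInf_le ⟨_, Submodule.mem_span_singleton_self _, hne, ?_⟩)
    (le_csInf ⟨_, _, Submodule.mem_span_singleton_self _, hne, rfl⟩ ?_)
  · simp [polyWeight, hsupp]
  · rintro _ ⟨c, hc, hc0, rfl⟩
    obtain ⟨u, rfl⟩ := Submodule.mem_span_singleton.1 hc
    exact le_polyWeight_mul_comp hδ ha hinj hq (left_ne_zero_of_smul hc0)
end

section
/- Let 𝔽 be a finite field and let C be a convolutional code of type [n,1,2] with canonical generator matrix 𝒢(z) = (𝒢₁(z),…,𝒢_n(z)) = G₀ + G₁z + G₂z², such that the stacked 3×n matrix (G₂; G₁; G₀) has rank 3; let μ be the minimum distance of the block code it spans and l(C) = ⌊3n/μ⌋ − 3. Let 𝓕(z) = F₀ + F₁z + F₂z² ∈ 𝔽[z] and let C̃ be the code of length n+1 generated by 𝒢̃(z) = (𝒢₁(z),…,𝒢_n(z), 𝓕(z)); assume its stacked 3×(n+1) matrix also has rank 3, with associated block-code distance μ̃ and l(C̃) = ⌊3(n+1)/μ̃⌋ − 3. For k ≥ 0 let 𝓕_k be the (k+1)×(k+3) matrix whose i-th row is (0,…,0,F₀,F₁,F₂,0,…,0)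 with F₀ in column i, and let d(𝓕_k) be the minimum Hamming weight of a nonzero 𝔽-linear combination of its rows. Set k₀ = max{l(C̃), l(C)}. If 𝓕_{k₀} has maximal rank k₀+1, then d_free(C̃) ≥ d_free(C) + d(𝓕_k) for every k ≥ k₀. -/
open Polynomial

/-- Append an entry to a row vector of polynomials. -/
noncomputable def snocRow {F : Type*} [Field F] {n : ℕ}
    (G : Fin n → Polynomial F) (f : Polynomial F) : Fin (n + 1) → Polynomial F :=
  Fin.snoc G f

theorem hammingWt_eq_card {F : Type*} [Field F] [DecidableEq F] {n : ℕ} (v : Fin n → F) :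
    hammingWt v = (Finset.univ.filter fun j => v j ≠ 0).card := by
  unfold hammingWt
  rw [← Set.ncard_coe_finset]
  congr 1
  ext j
  simp

theorem hammingWt_pos {F : Type*} [Field F] {n : ℕ} {v : Fin n → F} (hv : v ≠ 0) :
    0 < hammingWt v := by
  obtain ⟨j, hj⟩ := Function.ne_iff.mp hv
  exact (Set.ncard_pos (Set.toFinite _)).mpr ⟨j, hj⟩

theorem minDist_le_hammingWt {F : Type*} [Field F] {n : ℕ} {C : Submodule F (Fin n → F)}
    {v : Fin n → F} (hv : v ∈ C) (hv0 : v ≠ 0) : minDist C ≤ hammingWt v :=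
  Nat.sInf_le ⟨v, hv, hv0, rfl⟩

theorem minDist_pos {F : Type*} [Field F] {n : ℕ} {C : Submodule F (Fin n → F)}
    {v : Fin n → F} (hv : v ∈ C) (hv0 : v ≠ 0) : 0 < minDist C := by
  obtain ⟨w, -, hw0, hw⟩ : minDist C ∈ {d | ∃ v ∈ C, v ≠ 0 ∧ hammingWt v = d} :=
    Nat.sInf_mem ⟨_, v, hv, hv0, rfl⟩
  exact hw ▸ hammingWt_pos hw0

theorem freeDist_le_polyWeight {F : Type*} [Field F] {n : ℕ}
    {C : Submodule F[X] (Fin n → F[X])} {c : Fin n → F[X]} (hc : c ∈ C) (hc0 : c ≠ 0) :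
    freeDist C ≤ polyWeight c :=
  Nat.sInf_le ⟨c, hc, hc0, rfl⟩

/-- The coefficient of `z ^ (t - d)` in `α`, read as zero when `t < d`. -/
noncomputable def delayedCoeff {F : Type*} [Field F] (α : F[X]) (t d : ℕ) : F :=
  if d ≤ t then α.coeff (t - d) else 0

theorem coeff_mul_eq_sum_delayedCoeff {F : Type*} [Field F] (α : F[X]) {p : F[X]}
    (hp : p.natDegree ≤ 2) (t : ℕ) :
    (α * p).coeff t = ∑ d : Fin 3, delayedCoeff α t d * p.coeff d := by
  conv_lhs => rw [p.as_sum_range_C_mul_X_pow' (n := 3) (by omega)]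
  rw [Finset.mul_sum, finsetSum_coeff, Fin.sum_univ_eq_sum_range
    (fun d => delayedCoeff α t d * p.coeff d) 3]
  refine Finset.sum_congr rfl fun d _ => ?_
  rw [mul_left_comm, coeff_C_mul, coeff_mul_X_pow', delayedCoeff, mul_comm]

theorem exists_coeff_eq_coeff_add {F : Type*} [Field F] (α : F[X]) (m : ℕ) :
    ∃ γ : F[X], ∀ s, γ.coeff s = α.coeff (s + m) := by
  induction m with
  | zero => exact ⟨α, fun s => rfl⟩
  | succ m ih =>
    obtain ⟨γ, hγ⟩ := ih
    exact ⟨γ.divX, fun s => by rw [coeff_divX, hγ]; congr 1; ring⟩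

/-- If three consecutive coefficients of `α` ending at `t` vanish, then dropping the initial part
of `α` yields a shorter nonzero input whose output is no heavier. -/
theorem exists_shorter_input {F : Type*} [Field F] {m : ℕ} {H : Fin m → F[X]}
    (hdeg : ∀ j, (H j).natDegree ≤ 2) {α : F[X]} (hα : α ≠ 0) {t : ℕ}
    (ht : t < α.natDegree + 3) (hzero : ∀ d : Fin 3, delayedCoeff α t d = 0) :
    ∃ γ : F[X], γ ≠ 0 ∧ γ.natDegree < α.natDegree ∧ polyWeight (γ • H) ≤ polyWeight (α • H) := by
  have hlead : α.coeff α.natDegree ≠ 0 := by simpa using hα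
  have htk : t < α.natDegree := by
    by_contra h
    have hd := hzero ⟨t - α.natDegree, by omega⟩
    rw [delayedCoeff, if_pos (by simp)] at hd
    simp only [Nat.sub_sub_self (not_lt.mp h)] at hd
    exact hlead hd
  obtain ⟨γ, hγ⟩ := exists_coeff_eq_coeff_add α (t + 1)
  have hshift : ∀ j s, (γ * H j).coeff s = (α * H j).coeff (s + (t + 1)) := by
    intro j s
    rw [coeff_mul_eq_sum_delayedCoeff _ (hdeg j), coeff_mul_eq_sum_delayedCoeff _ (hdeg j)]
    refine Finset.sum_congr rfl fun d _ => ?_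
    congr 1
    have hd3 := d.2
    by_cases hds : (d : ℕ) ≤ s
    · rw [delayedCoeff, delayedCoeff, if_pos hds, if_pos (by omega), hγ]
      congr 1
      omega
    · have hd := hzero ⟨(d : ℕ) - s - 1, by omega⟩
      rw [delayedCoeff, if_neg hds, delayedCoeff]
      split_ifs with hle
      · rw [delayedCoeff, if_pos (by simp only; omega)] at hd
        rw [← hd]
        congr 1
        simp only
        omega
      · rfl
  refine ⟨γ, fun h => hlead ?_, ?_, ?_⟩
  · have := hγ (α.natDegree - (t + 1))
    rw [h, coeff_zero, Nat.sub_add_cancel (by omega)] at this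
    exact this.symm
  · have : γ.natDegree ≤ α.natDegree - 1 := by
      rw [natDegree_le_iff_coeff_eq_zero]
      intro s hs
      rw [hγ]
      exact coeff_eq_zero_of_natDegree_lt (by omega)
    omega
  · refine Finset.sum_le_sum fun j _ => ?_
    refine Finset.card_le_card_of_injOn (fun s => s + (t + 1)) (fun s hs => ?_)
      (fun a _ b _ hab => by simpa using hab)
    simpa [hshift] using hs

theorem mul_le_polyWeight {F : Type*} [Field F] {m N μ : ℕ} (c : Fin m → F[X])
    (h : ∀ t < N, μ ≤ hammingWt fun j => (c j).coeff t) : N * μ ≤ polyWeight c := by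
  classical
  calc N * μ = ∑ t ∈ Finset.range N, μ := by simp
    _ ≤ ∑ t ∈ Finset.range N, hammingWt fun j => (c j).coeff t :=
        Finset.sum_le_sum fun t ht => h t (Finset.mem_range.mp ht)
    _ = ∑ t ∈ Finset.range N, ∑ j, if (c j).coeff t ≠ 0 then 1 else 0 := by
        simp only [hammingWt_eq_card, Finset.card_filter]
    _ = ∑ j, ∑ t ∈ Finset.range N, if (c j).coeff t ≠ 0 then 1 else 0 := Finset.sum_comm
    _ ≤ polyWeight c := by
        refine Finset.sum_le_sum fun j _ => ?_
        rw [← Finset.card_filter]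
        refine Finset.card_le_card fun t ht => ?_
        simpa using (Finset.mem_filter.mp ht).2

theorem polyWeight_le_three_mul {F : Type*} [Field F] {m : ℕ} {H : Fin m → F[X]}
    (hdeg : ∀ j, (H j).natDegree ≤ 2) : polyWeight H ≤ 3 * m := by
  calc polyWeight H ≤ ∑ _j : Fin m, 3 := Finset.sum_le_sum fun j _ =>
        (card_supp_le_succ_natDegree (H j)).trans (by have := hdeg j; omega)
    _ = 3 * m := by simp [mul_comm]

/-- The free distance of a code of type `[m,1,2]` whose coefficient rows are independent is attained
by an input polynomial of degree at most `⌊3m/μ⌋ - 3`. -/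
theorem exists_input_polyWeight_eq_freeDist {F : Type*} [Field F] {m : ℕ} {H : Fin m → F[X]}
    (hdeg : ∀ j, (H j).natDegree ≤ 2)
    (hli : LinearIndependent F fun d : Fin 3 => fun j : Fin m => (H j).coeff (d : ℕ)) :
    ∃ α : F[X], α ≠ 0 ∧
      α.natDegree ≤ 3 * m / minDist (Submodule.span F
        (Set.range fun d : Fin 3 => fun j : Fin m => (H j).coeff (d : ℕ))) - 3 ∧
      polyWeight (α • H) = freeDist (Submodule.span F[X] {H}) := by
  set R : Fin 3 → Fin m → F := fun d j => (H j).coeff (d : ℕ) with hR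
  have hH : H ≠ 0 := by
    rintro rfl
    exact hli.ne_zero 0 (by ext j; simp [hR])
  have hsmul : ∀ α : F[X], α ≠ 0 → freeDist (Submodule.span F[X] {H}) ≤ polyWeight (α • H) :=
    fun α hα => freeDist_le_polyWeight
      (Submodule.smul_mem _ _ (Submodule.mem_span_singleton_self H)) (smul_ne_zero hα hH)
  have hmin : ∃ k, ∃ α : F[X], α ≠ 0 ∧ α.natDegree = k ∧
      polyWeight (α • H) = freeDist (Submodule.span F[X] {H}) := by
    obtain ⟨c, hc, hc0, hcw⟩ : freeDist (Submodule.span F[X] {H}) ∈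
        {d | ∃ c ∈ Submodule.span F[X] {H}, c ≠ 0 ∧ polyWeight c = d} :=
      Nat.sInf_mem ⟨_, H, Submodule.mem_span_singleton_self H, hH, rfl⟩
    obtain ⟨α, rfl⟩ := Submodule.mem_span_singleton.mp hc
    exact ⟨_, α, fun h => hc0 (by rw [h, zero_smul]), rfl, hcw⟩
  classical
  obtain ⟨α, hα, hk, hw⟩ := Nat.find_spec hmin
  refine ⟨α, hα, ?_, hw⟩
  have hpos : 0 < minDist (Submodule.span F (Set.range R)) :=
    minDist_pos (Submodule.subset_span ⟨0, rfl⟩) (hli.ne_zero 0)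
  have hslice : ∀ t < α.natDegree + 3,
      minDist (Submodule.span F (Set.range R)) ≤ hammingWt fun j => ((α • H) j).coeff t := by
    intro t ht
    have hcomb : (fun j => ((α • H) j).coeff t) = ∑ d : Fin 3, delayedCoeff α t d • R d := by
      ext j
      simp only [Pi.smul_apply, smul_eq_mul, Finset.sum_apply]
      exact coeff_mul_eq_sum_delayedCoeff α (hdeg j) t
    refine minDist_le_hammingWt ?_ fun h0 => ?_
    · rw [hcomb]
      exact Submodule.sum_mem _ fun d _ =>
        Submodule.smul_mem _ _ (Submodule.subset_span ⟨d, rfl⟩)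
    · rw [hcomb] at h0
      obtain ⟨γ, hγ, hγdeg, hγw⟩ := exists_shorter_input hdeg hα ht
        (Fintype.linearIndependent_iff.mp hli _ h0)
      exact Nat.find_min hmin (hk ▸ hγdeg)
        ⟨γ, hγ, rfl, le_antisymm (hγw.trans hw.le) (hsmul γ hγ)⟩
  have hle : (α.natDegree + 3) * minDist (Submodule.span F (Set.range R)) ≤ 3 * m := by
    refine (mul_le_polyWeight _ hslice).trans ?_
    rw [hw]
    simpa using (hsmul 1 one_ne_zero).trans
      (by simpa using polyWeight_le_three_mul hdeg)
  have := (Nat.le_div_iff_mul_le hpos).mpr hle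
  omega

theorem polyWeight_smul_snocRow {F : Type*} [Field F] {n : ℕ} (α f : F[X]) (G : Fin n → F[X]) :
    polyWeight (α • snocRow G f) = polyWeight (α • G) + (α * f).support.card := by
  simp [polyWeight, snocRow, Fin.sum_univ_castSucc]

/-- The minimum distance of the sliding code is a lower bound for the weight of `α * f` whenever
`α` has degree at most `k`. -/
theorem minDist_sliding_le_card_support {F : Type*} [Field F] {F0 F1 F2 : F} {α : F[X]} {k : ℕ}
    (hα : α.natDegree ≤ k) (h0 : α * (C F0 + C F1 * X + C F2 * X ^ 2) ≠ 0) :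
    minDist (Submodule.span F (Set.range fun i : Fin (k + 1) => fun j : Fin (k + 3) =>
      if (j : ℕ) = (i : ℕ) then F0 else if (j : ℕ) = (i : ℕ) + 1 then F1
        else if (j : ℕ) = (i : ℕ) + 2 then F2 else 0)) ≤
      (α * (C F0 + C F1 * X + C F2 * X ^ 2)).support.card := by
  classical
  set f : F[X] := C F0 + C F1 * X + C F2 * X ^ 2 with hf
  have hfdeg : f.natDegree ≤ 2 := by rw [hf]; compute_degree
  set v : Fin (k + 3) → F := fun j => (α * f).coeff j with hv
  have hvmem : v = ∑ i : Fin (k + 1), α.coeff i • fun j : Fin (k + 3) =>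
      if (j : ℕ) = (i : ℕ) then F0 else if (j : ℕ) = (i : ℕ) + 1 then F1
        else if (j : ℕ) = (i : ℕ) + 2 then F2 else 0 := by
    ext j
    simp only [hv, Finset.sum_apply, Pi.smul_apply, smul_eq_mul]
    conv_lhs => rw [α.as_sum_range_C_mul_X_pow' (n := k + 1) (by omega)]
    rw [Finset.sum_mul, finsetSum_coeff, Fin.sum_univ_eq_sum_range (fun i => α.coeff i *
      if (j : ℕ) = i then F0 else if (j : ℕ) = i + 1 then F1
        else if (j : ℕ) = i + 2 then F2 else 0) (k + 1)]
    refine Finset.sum_congr rfl fun i _ => ?_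
    rw [mul_assoc, coeff_C_mul, coeff_X_pow_mul']
    congr 1
    simp only [hf, coeff_add, coeff_C, coeff_C_mul, coeff_X, coeff_X_pow]
    split_ifs <;> first | omega | simp
  have hvwt : hammingWt v ≤ (α * f).support.card := by
    rw [hammingWt_eq_card]
    refine Finset.card_le_card_of_injOn (fun j => (j : ℕ)) (fun j hj => ?_)
      (fun a _ b _ hab => Fin.ext hab)
    simpa [hv] using hj
  refine (minDist_le_hammingWt ?_ fun hv0 => h0 ?_).trans hvwt
  · rw [hvmem]
    exact Submodule.sum_mem _ fun i _ => Submodule.smul_mem _ _ (Submodule.subset_span ⟨i, rfl⟩)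
  · ext t
    rw [coeff_zero]
    by_cases ht : t < k + 3
    · exact congrFun hv0 ⟨t, ht⟩
    · refine coeff_eq_zero_of_natDegree_lt ?_
      have := natDegree_mul_le (p := α) (q := f)
      omega

/-- Let `C` be a convolutional code of type `[n,1,2]` with canonical
generator matrix `𝒢(z) = G₀ + G₁z + G₂z²` whose stacked `3 × n` coefficient matrix has
rank `3`, and let `C̃` be the length-`(n+1)` code obtained by appending the polynomial
`𝓕(z) = F₀ + F₁z + F₂z²`, whose stacked `3 × (n+1)` matrix also has rank `3`. With
`l(C) = ⌊3n/μ⌋ − 3`, `l(C̃) = ⌊3(n+1)/μ̃⌋ − 3` and `k₀ = max{l(C̃), l(C)}`, if the sliding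
matrix `𝓕_{k₀}` has maximal rank `k₀+1`, then
`d_free(C̃) ≥ d_free(C) + d(𝓕_k)` for every `k ≥ k₀`. -/
theorem freeDist_extension_lower_bound {F : Type*} [Field F] [Fintype F] {n : ℕ}
    (G : Fin n → Polynomial F) (F0 F1 F2 : F)
    (hbasic : Ideal.span (Set.range G) = ⊤)
    (hdeg : ∀ j, (G j).natDegree ≤ 2) (hdeg2 : ∃ j, (G j).natDegree = 2)
    (hrank : Matrix.rank
      (Matrix.of fun (d : Fin 3) (j : Fin n) => (G j).coeff (d : ℕ)) = 3)
    (hrank' : Matrix.rank (Matrix.of fun (d : Fin 3) (j : Fin (n + 1)) =>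
      (snocRow G (Polynomial.C F0 + Polynomial.C F1 * Polynomial.X +
        Polynomial.C F2 * Polynomial.X ^ 2) j).coeff (d : ℕ)) = 3)
    (μ μ' : ℕ)
    (hμ : μ = minDist (Submodule.span F
      (Set.range fun d : Fin 3 => fun j : Fin n => (G j).coeff (d : ℕ))))
    (hμ' : μ' = minDist (Submodule.span F
      (Set.range fun d : Fin 3 => fun j : Fin (n + 1) =>
        (snocRow G (Polynomial.C F0 + Polynomial.C F1 * Polynomial.X +
          Polynomial.C F2 * Polynomial.X ^ 2) j).coeff (d : ℕ))))
    (k₀ : ℕ) (hk₀ : k₀ = max (3 * (n + 1) / μ' - 3) (3 * n / μ - 3))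
    (hFrank : Matrix.rank (Matrix.of fun (i : Fin (k₀ + 1)) (j : Fin (k₀ + 3)) =>
      if (j : ℕ) = (i : ℕ) then F0 else if (j : ℕ) = (i : ℕ) + 1 then F1
        else if (j : ℕ) = (i : ℕ) + 2 then F2 else 0) = k₀ + 1) :
    ∀ k ≥ k₀,
      freeDist (Submodule.span (Polynomial F) {G}) +
        minDist (Submodule.span F (Set.range fun i : Fin (k + 1) => fun j : Fin (k + 3) =>
          if (j : ℕ) = (i : ℕ) then F0 else if (j : ℕ) = (i : ℕ) + 1 then F1
            else if (j : ℕ) = (i : ℕ) + 2 then F2 else 0)) ≤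
      freeDist (Submodule.span (Polynomial F)
        {snocRow G (Polynomial.C F0 + Polynomial.C F1 * Polynomial.X +
          Polynomial.C F2 * Polynomial.X ^ 2)}) := by
  intro k hk
  have hf : (C F0 + C F1 * X + C F2 * X ^ 2 : F[X]) ≠ 0 := by
    intro h
    have h0 : F0 = 0 := by simpa [coeff_X, coeff_C] using congrArg (fun p => coeff p 0) h
    have h1 : F1 = 0 := by simpa [coeff_X, coeff_C] using congrArg (fun p => coeff p 1) h
    have h2 : F2 = 0 := by simpa [coeff_X, coeff_C] using congrArg (fun p => coeff p 2) h
    subst h0 h1 h2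
    simp only [ite_self] at hFrank
    have : Matrix.rank (0 : Matrix (Fin (k₀ + 1)) (Fin (k₀ + 3)) F) = k₀ + 1 := hFrank
    rw [Matrix.rank_zero] at this
    omega
  have hfdeg : (C F0 + C F1 * X + C F2 * X ^ 2 : F[X]).natDegree ≤ 2 := by compute_degree
  have hG : G ≠ 0 := by
    rintro rfl
    simp at hdeg2
  have hli := linearIndependent_iff_card_eq_finrank_span.mpr
    ((Fintype.card_fin 3).trans (hrank'.symm.trans (Matrix.rank_eq_finrank_span_row _)))
  have hdeg' : ∀ j, (snocRow G (C F0 + C F1 * X + C F2 * X ^ 2) j).natDegree ≤ 2 := by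
    intro j
    refine Fin.lastCases ?_ (fun i => ?_) j
    · simpa [snocRow] using hfdeg
    · simpa [snocRow] using hdeg i
  obtain ⟨α, hα, hαdeg, hαw⟩ := exists_input_polyWeight_eq_freeDist hdeg' hli
  rw [← hμ'] at hαdeg
  rw [← hαw, polyWeight_smul_snocRow]
  refine add_le_add (freeDist_le_polyWeight
    (Submodule.smul_mem _ _ (Submodule.mem_span_singleton_self G)) (smul_ne_zero hα hG)) ?_
  exact minDist_sliding_le_card_support
    (hαdeg.trans ((le_max_left _ _).trans (hk₀ ▸ hk))) (mul_ne_zero hα hf)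
end

section
/- Let 𝔽 be a field and F₀, F₁, F₂ ∈ 𝔽 with F₀ ≠ 0 and F₂ ≠ 0. For k ≥ 0 let 𝓕_k be the (k+1)×(k+3) matrix whose i-th row (1 ≤ i ≤ k+1) is (0,…,0,F₀,F₁,F₂,0,…,0) with F₀ in column i, and for m ≥ 0 let d_m be the determinant of the (m+1)×(m+1) Toeplitz matrix with F₁ on the diagonal, F₂ on the superdiagonal and F₀ on the subdiagonal. If d_m ≠ 0 for all 0 ≤ m ≤ k, then every nonzero 𝔽-linear combination of the rows of 𝓕_k has Hamming weight at least 3; that is, 𝓕_k generates an MDS linear block code of length k+3 and dimension k+1. -/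
open Polynomial

/-- If `F₀ ≠ 0`, `F₂ ≠ 0` and all the tridiagonal Toeplitz determinants
`d_m`, `0 ≤ m ≤ k`, are nonzero, then every nonzero linear combination of the rows of the
`(k+1) × (k+3)` sliding matrix `𝓕_k` (whose `i`-th row is `(0,…,0,F₀,F₁,F₂,0,…,0)` with
`F₀` in column `i`) has Hamming weight at least `3`; i.e. `𝓕_k` generates an MDS block code
of length `k+3` and dimension `k+1`. -/
theorem sliding_matrix_MDS {F : Type*} [Field F] (F0 F1 F2 : F) (h0 : F0 ≠ 0) (h2 : F2 ≠ 0)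
    (k : ℕ)
    (hd : ∀ m ≤ k, Matrix.det (Matrix.of fun i j : Fin (m + 1) =>
        if i = j then F1 else if (j : ℕ) = (i : ℕ) + 1 then F2
          else if (i : ℕ) = (j : ℕ) + 1 then F0 else 0) ≠ 0) :
    ∀ v : Fin (k + 1) → F, v ≠ 0 →
      3 ≤ hammingWt (fun j : Fin (k + 3) => ∑ i : Fin (k + 1), v i *
        (if (j : ℕ) = (i : ℕ) then F0 else if (j : ℕ) = (i : ℕ) + 1 then F1
          else if (j : ℕ) = (i : ℕ) + 2 then F2 else 0)) := by
  classical
  intro v hv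
  have hne : (Finset.univ.filter fun i => v i ≠ 0).Nonempty := by
    obtain ⟨i, hi⟩ := Function.ne_iff.mp hv
    exact ⟨i, by simpa using hi⟩
  -- `a` and `b` are the first and the last index of the support of `v`.
  obtain ⟨a, ha, hamin⟩ := Finset.exists_min_image _ id hne
  obtain ⟨b, hb, hbmax⟩ := Finset.exists_max_image _ id hne
  simp only [Finset.mem_filter, Finset.mem_univ, true_and, id] at ha hb hamin hbmax
  have hab : (a : ℕ) ≤ b := hamin b hb
  have hbk := b.isLt
  unfold hammingWt
  set c : Fin (k + 3) → F := fun j => ∑ i : Fin (k + 1), v i *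
        (if (j : ℕ) = (i : ℕ) then F0 else if (j : ℕ) = (i : ℕ) + 1 then F1
          else if (j : ℕ) = (i : ℕ) + 2 then F2 else 0) with hc
  have hfirst : c ⟨a, by omega⟩ ≠ 0 := by
    have : c ⟨a, by omega⟩ = v a * F0 := by
      simp only [hc]
      rw [Finset.sum_eq_single a (fun i _ hia => ?_) (by simp)]
      · simp
      · by_cases hi : v i = 0
        · simp [hi]
        · have h1 : (a : ℕ) ≤ i := hamin i hi
          have h3 : (i : ℕ) ≠ a := fun h => hia (Fin.ext h)
          rw [if_neg (by omega), if_neg (by omega), if_neg (by omega), mul_zero]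
    rw [this]
    exact mul_ne_zero ha h0
  have hlast : c ⟨b + 2, by omega⟩ ≠ 0 := by
    have : c ⟨b + 2, by omega⟩ = v b * F2 := by
      simp only [hc]
      rw [Finset.sum_eq_single b (fun i _ hib => ?_) (by simp)]
      · simp
      · by_cases hi : v i = 0
        · simp [hi]
        · have h1 : (i : ℕ) ≤ b := hbmax i hi
          have h3 : (i : ℕ) ≠ b := fun h => hib (Fin.ext h)
          rw [if_neg (by omega), if_neg (by omega), if_neg (by omega), mul_zero]
    rw [this]
    exact mul_ne_zero hb h2
  -- If `c` vanished strictly between, the Toeplitz matrix would kill the support of `v`.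
  obtain ⟨s, hs⟩ : ∃ s : Fin (b - a + 1), c ⟨a + 1 + s, by omega⟩ ≠ 0 := by
    by_contra! hzero
    refine hd (b - a) (by omega) (Matrix.exists_vecMul_eq_zero_iff.mp
      ⟨fun i : Fin (b - a + 1) => v ⟨a + i, by omega⟩, fun h => ha (congrFun h 0), ?_⟩)
    funext s
    refine Eq.trans ?_ (hzero s)
    refine Fintype.sum_of_injective (fun i : Fin (b - a + 1) => (⟨a + i, by omega⟩ : Fin (k + 1)))
      (fun i j hij => ?_) _ _ (fun i hi => ?_) (fun i => ?_)
    · simpa [Fin.ext_iff] using hij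
    · by_cases hvi : v i = 0
      · simp [hvi]
      · have h1 : (a : ℕ) ≤ i := hamin i hvi
        have h3 : (i : ℕ) ≤ b := hbmax i hvi
        exact absurd ⟨⟨i - a, by omega⟩, Fin.ext (by simp; omega)⟩ hi
    · simp only [Matrix.of_apply, Fin.ext_iff]
      congr 1
      split_ifs <;> first | rfl | omega
  exact (Set.two_lt_ncard_iff (Set.toFinite _)).mpr
    ⟨_, _, _, hfirst, hs, hlast, by simp [Fin.ext_iff]; omega, by simp [Fin.ext_iff]; omega,
      by simp [Fin.ext_iff]; omega⟩
end
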